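/- Let M = V ∪_S W be the standard genus three Heegaard splitting of the 3-torus, D = q({z = 1/2} ∩ C) ∩ V, E = q({z = 0} ∩ C) ∩ W, D′ = q({x = 1/2} ∩ C) ∩ V, and E′ = q({x = 0} ∩ C) ∩ W. Define C₀ to consist of (boundaries of) essential disks in V disjoint from E together with essential disks in W disjoint from D, and C₁ to consist of all remaining vertices of the disk complex D(S). Then D ∈ D_V(S) ∩ C₀ and E ∈ D_W(S) ∩ C₀ with D ∩ E = ∅, and D′ ∈ D_V(S) ∩ C₁ and E′ ∈ D_W(S) ∩ C₁ with D′ ∩ E′ = ∅. -/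

import Mathlib

/-!
Since `ℝ³` carries the sup metric, everything is made of boxes: `V` consists of the points of the
torus with at least two coordinates within `1/4` of zero, `W` of those with at least two
coordinates at distance at least `1/4`, and `S = V ∩ W`. The disks `D`, `D'`, `E`, `E'` are flat
squares, so that they are proper disks and `D ∩ E = D' ∩ E' = ∅` by inspection.

The topological input is a winding number. The projection of `W` to the `(x, y)`-torus misses
`(0, 0)`, and that of `V` misses `(1, 1)`; likewise for `(y, z)`. A homotopy in the punctured torus
starting at a square loop around the puncture lifts to `ℝ²`, where the winding number around the
corresponding lifted puncture stays nonzero, i.e. no continuous logarithm exists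
(`torus_homotopy_obstruction`). This has two consequences.

* `no_disk_of_winding`: `∂D` and `∂D'` are not null-homotopic in `W`, nor are `∂E` and `∂E'` in `V`.
  Hence all four curves are essential in `S`, `∂D'` is not isotopic to the boundary of a disk in
  `W`, and `∂E'` is not isotopic to the boundary of a disk in `V`.
* `no_pull_off`: an isotopy of `S` carrying `∂D' = S ∩ {x = 1/2}` off `∂E` yields, by inversion, a
  homotopy in `V` from `∂E` to a loop missing `x = 1/2`. A lift of that loop to the
  `(x, y)`-plane stays on one side of `x = 1/2`, hence misses a horizontal ray issuing from
  `(1, 1)` and has winding number zero around it, which is absurd. The same argument with `x = 0`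
  shows that `∂E'` cannot be isotoped off `∂D`.

So `D'` and `E'` do not belong to `C₀`, whereas `D` and `E` do because they are disjoint.
-/

open Set Metric Topology

noncomputable section

/-- The closed unit disk in the plane. -/
def Disk2 : Set (ℝ × ℝ) := Metric.closedBall 0 1

/-- The unit circle in the plane. -/
def Circle1 : Set (ℝ × ℝ) := Metric.sphere 0 1

variable {X : Type*} [TopologicalSpace X]

/-- `γ` is a simple closed curve (an embedded image of the unit circle). -/
def IsSCC (γ : Set X) : Prop :=
  ∃ f : (ℝ × ℝ) → X, ContinuousOn f Circle1 ∧ Set.InjOn f Circle1 ∧ f '' Circle1 = γ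

/-- The curve `γ` bounds an embedded disk contained in `A`. -/
def BoundsDiskIn (γ A : Set X) : Prop :=
  ∃ f : (ℝ × ℝ) → X, ContinuousOn f Disk2 ∧ Set.InjOn f Disk2 ∧
    f '' Disk2 ⊆ A ∧ f '' Circle1 = γ

/-- `Δ` is a properly embedded disk in `V` whose boundary lies on the surface `S`. -/
def IsProperDisk (Δ V S : Set X) : Prop :=
  ∃ f : (ℝ × ℝ) → X, ContinuousOn f Disk2 ∧ Set.InjOn f Disk2 ∧
    f '' Disk2 = Δ ∧ Δ ⊆ V ∧ f '' Circle1 = Δ ∩ S ∧ f '' (Disk2 \ Circle1) ⊆ V \ S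

/-- `Δ` is an essential disk in `V` (with `∂Δ = Δ ∩ S` an essential curve on `S`,
i.e. `∂Δ` bounds no disk in the surface `S`). -/
def IsEssentialDisk (Δ V S : Set X) : Prop :=
  IsProperDisk Δ V S ∧ ¬ BoundsDiskIn (Δ ∩ S) S

/-- `A` and `B` are ambiently isotopic by an isotopy of `X` preserving `V` setwise. -/
def AmbIsotopicIn (A B V : Set X) : Prop :=
  ∃ F : ℝ → X ≃ₜ X, Continuous (fun p : ℝ × X => F p.1 p.2) ∧
    F 0 = Homeomorph.refl X ∧ (∀ t, (F t) '' V = V) ∧ (F 1) '' A = B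

/-- The isotopy class of the curve `γ` bounds an essential disk in `V`
(i.e. `γ` is a vertex of the subcomplex `D_V(S)` of the disk complex). -/
def InDiskSet (γ V S : Set X) : Prop :=
  ∃ γ' Δ, AmbIsotopicIn γ γ' S ∧ IsEssentialDisk Δ V S ∧ Δ ∩ S = γ'

/-- `γ` represents a vertex of the disk complex `D(S)` of the splitting surface `S`
of `M = V ∪_S W` : an essential simple closed curve in `S` bounding an essential
disk in `V` or in `W` (up to isotopy). -/
def IsVertex (γ V W S : Set X) : Prop :=
  IsSCC γ ∧ γ ⊆ S ∧ ¬ BoundsDiskIn γ S ∧ (InDiskSet γ V S ∨ InDiskSet γ W S)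

/-- Chain of `n` pairwise tangent circles in the plane `z = 0` of `ℝ³`. -/
def chainCircles (n : ℕ) : Set ((ℝ × ℝ) × ℝ) :=
  ⋃ i ∈ Finset.range n, {p | (p.1.1 - 2 * i) ^ 2 + p.1.2 ^ 2 = 1 ∧ p.2 = 0}

/-- A standard model of the genus `n` handlebody in `ℝ³`: a closed regular
neighborhood of a wedge of `n` circles (a closed ball if `n = 0`). -/
def ModelHandlebody (n : ℕ) : Set ((ℝ × ℝ) × ℝ) :=
  if n = 0 then Metric.closedBall 0 1 else Metric.cthickening (1 / 4) (chainCircles n)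

/-- `A` is a handlebody of genus `n`. -/
def IsHandlebody (A : Set X) (n : ℕ) : Prop := Nonempty (A ≃ₜ ModelHandlebody n)

/-- The splitting surface `S` of `M = V ∪_S W` is critical: the vertices of the disk
complex `D(S)` can be partitioned into `C0` and `C1` such that (1) for each `i` there is
a pair of disjoint essential disks on the two sides with boundaries in `C i`, and (2)
a disk in `D_V(S) ∩ C i` and a disk in `D_W(S) ∩ C (1-i)` always intersect,
for any representatives. -/
def IsCriticalSurface (V W S : Set X) : Prop :=
  ∃ C0 C1 : Set (Set X),
    Disjoint C0 C1 ∧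
    (∀ γ, IsVertex γ V W S ↔ γ ∈ C0 ∪ C1) ∧
    (∃ ΔV ΔW, IsEssentialDisk ΔV V S ∧ IsEssentialDisk ΔW W S ∧
      (ΔV ∩ S) ∈ C0 ∧ (ΔW ∩ S) ∈ C0 ∧ Disjoint ΔV ΔW) ∧
    (∃ ΔV ΔW, IsEssentialDisk ΔV V S ∧ IsEssentialDisk ΔW W S ∧
      (ΔV ∩ S) ∈ C1 ∧ (ΔW ∩ S) ∈ C1 ∧ Disjoint ΔV ΔW) ∧
    (∀ γV γW, γV ∈ C0 → InDiskSet γV V S → γW ∈ C1 → InDiskSet γW W S →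
      ∀ γV' γW', AmbIsotopicIn γV γV' S → AmbIsotopicIn γW γW' S → ¬ Disjoint γV' γW') ∧
    (∀ γV γW, γV ∈ C1 → InDiskSet γV V S → γW ∈ C0 → InDiskSet γW W S →
      ∀ γV' γW', AmbIsotopicIn γV γV' S → AmbIsotopicIn γW γW' S → ¬ Disjoint γV' γW')


/-- The 3-torus, as the quotient `ℝ³/(2ℤ)³` (i.e. the cube `[-1,1]³` with opposite
faces identified). -/
abbrev T3 : Type := AddCircle (2 : ℝ) × AddCircle (2 : ℝ) × AddCircle (2 : ℝ)

/-- The quotient map `q : ℝ³ → T³` (restricting to the cube `C = [-1,1]³`, it is the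
map identifying the three pairs of opposite faces of `C`). -/
def qT : ℝ × ℝ × ℝ → T3 :=
  fun p => ((p.1 : AddCircle (2 : ℝ)), (p.2.1 : AddCircle (2 : ℝ)), (p.2.2 : AddCircle (2 : ℝ)))

/-- The cube `C = [-1,1]³`. -/
def Cube : Set (ℝ × ℝ × ℝ) :=
  {p | p.1 ∈ Icc (-1 : ℝ) 1 ∧ p.2.1 ∈ Icc (-1 : ℝ) 1 ∧ p.2.2 ∈ Icc (-1 : ℝ) 1}

/-- The union of the three coordinate axes of `ℝ³`. -/
def Axes : Set (ℝ × ℝ × ℝ) :=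
  {p | p.2.1 = 0 ∧ p.2.2 = 0} ∪ {p | p.1 = 0 ∧ p.2.2 = 0} ∪ {p | p.1 = 0 ∧ p.2.1 = 0}

/-- The genus three handlebody `V`: the image under `q` of a tubular neighborhood of
the union of the three axes in the cube. -/
def Vh : Set T3 := qT '' (Metric.cthickening (1 / 4) Axes ∩ Cube)

/-- The Heegaard surface `S = ∂V`. -/
def Sh : Set T3 := frontier Vh

/-- The complementary genus three handlebody `W = cl(M - V)`. -/
def Wh : Set T3 := closure Vhᶜ

/-- The meridian disk `D = q({z = 1/2} ∩ C) ∩ V` of `V`. -/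
def Dd : Set T3 := qT '' ({p | p.2.2 = 1 / 2} ∩ Cube) ∩ Vh

/-- The meridian disk `E = q({z = 0} ∩ C) ∩ W` of `W`. -/
def Ee : Set T3 := qT '' ({p | p.2.2 = 0} ∩ Cube) ∩ Wh

/-- The meridian disk `D' = q({x = 1/2} ∩ C) ∩ V` of `V`. -/
def Dd' : Set T3 := qT '' ({p | p.1 = 1 / 2} ∩ Cube) ∩ Vh

/-- The meridian disk `E' = q({x = 0} ∩ C) ∩ W` of `W`. -/
def Ee' : Set T3 := qT '' ({p | p.1 = 0} ∩ Cube) ∩ Wh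

/-- The isotopy class of `γ` contains the boundary of an essential disk in `V`
disjoint from `E` (i.e. the vertex `γ` lies in `C₀` via the `V`-side). -/
def VertexInC0V (γ : Set T3) : Prop :=
  ∃ γ' Δ, AmbIsotopicIn γ γ' Sh ∧ IsEssentialDisk Δ Vh Sh ∧ Δ ∩ Sh = γ' ∧ Disjoint Δ Ee

/-- The isotopy class of `γ` contains the boundary of an essential disk in `W`
disjoint from `D` (i.e. the vertex `γ` lies in `C₀` via the `W`-side). -/
def VertexInC0W (γ : Set T3) : Prop :=
  ∃ γ' Δ, AmbIsotopicIn γ γ' Sh ∧ IsEssentialDisk Δ Wh Sh ∧ Δ ∩ Sh = γ' ∧ Disjoint Δ Dd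

/-- The part `C₀` of the partition of the vertices of the disk complex `D(S)`:
essential disks in `V` disjoint from `E` together with essential disks in `W`
disjoint from `D`. -/
def C0set : Set (Set T3) := {γ | IsVertex γ Vh Wh Sh ∧ (VertexInC0V γ ∨ VertexInC0W γ)}

/-- The part `C₁` of the partition: all remaining vertices of `D(S)`. -/
def C1set : Set (Set T3) := {γ | IsVertex γ Vh Wh Sh ∧ ¬(VertexInC0V γ ∨ VertexInC0W γ)}

/-- The vertices of `D_V(S) ∩ C₀`. -/
def DVC0 : Set (Set T3) := {γ | γ ∈ C0set ∧ InDiskSet γ Vh Sh}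

/-- The vertices of `D_W(S) ∩ C₀`. -/
def DWC0 : Set (Set T3) := {γ | γ ∈ C0set ∧ InDiskSet γ Wh Sh}

/-- The vertices of `D_V(S) ∩ C₁`. -/
def DVC1 : Set (Set T3) := {γ | γ ∈ C1set ∧ InDiskSet γ Vh Sh}

/-- The vertices of `D_W(S) ∩ C₁`. -/
def DWC1 : Set (Set T3) := {γ | γ ∈ C1set ∧ InDiskSet γ Wh Sh}

/-! ### Winding-number obstructions -/

/-- Continuous logarithms extend backwards along a homotopy through nonvanishing functions. -/
lemma exists_log_of_homotopy {A : Type*} [TopologicalSpace A] (H : C(unitInterval × A, ℂ))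
    (hH : ∀ x, H x ≠ 0) (l : C(A, ℂ)) (hl : ∀ a, Complex.exp (l a) = H (1, a)) :
    ∃ l' : C(A, ℂ), ∀ a, Complex.exp (l' a) = H (0, a) := by
  let K : C(unitInterval × A, {z : ℂ // z ≠ 0}) :=
    ⟨fun x => ⟨H (unitInterval.symm x.1, x.2), hH _⟩, by fun_prop⟩
  have h0 : ∀ a, K (0, a) = ⟨Complex.exp (l a), Complex.exp_ne_zero _⟩ := by
    intro a
    apply Subtype.ext
    simp [K, hl]
  let L := Complex.isCoveringMap_exp.liftHomotopy K l h0
  refine ⟨⟨fun a => L (1, a), by fun_prop⟩, fun a => ?_⟩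
  have := congrFun (Complex.isCoveringMap_exp.liftHomotopy_lifts K l h0) (1, a)
  have := congrArg Subtype.val this
  simpa [K, L] using this

/-- A loop winding once around the origin has no continuous logarithm. -/
lemma no_log_circle (ρ : C(Circle, ℝ)) (hρ : ∀ w, 0 < ρ w) (l : C(Circle, ℂ))
    (hl : ∀ w : Circle, Complex.exp (l w) = (ρ w : ℂ) * w) : False := by
  let g : ℝ → ℝ := fun t => ((l (Circle.exp t)).im - t) / (2 * Real.pi)
  have hg : Continuous g := by fun_prop
  have hint : ∀ t, ∃ n : ℤ, g t = n := by
    intro t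
    have h := hl (Circle.exp t)
    have h2 : Complex.exp (l (Circle.exp t)) =
        Complex.exp ((Real.log (ρ (Circle.exp t)) : ℂ) + t * Complex.I) := by
      rw [h, Complex.exp_add, ← Complex.ofReal_exp, Real.exp_log (hρ _), Circle.coe_exp]
    obtain ⟨n, hn⟩ := Complex.exp_eq_exp_iff_exists_int.1 h2
    refine ⟨n, ?_⟩
    have := congrArg Complex.im hn
    simp at this
    simp only [g]
    rw [this]
    field_simp
    ring
  choose n hn using hint
  have hnc : Continuous n := by
    rw [Int.isClosedEmbedding_coe_real.isEmbedding.continuous_iff]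
    exact hg.congr hn
  have : n 0 = n (2 * Real.pi) := PreconnectedSpace.constant inferInstance hnc
  have h3 : g 0 = g (2 * Real.pi) := by rw [hn, hn, this]
  have hpi := Real.pi_pos
  simp only [g, Circle.exp_zero, Circle.exp_two_pi] at h3
  field_simp at h3
  linarith

/-- A homotopy in the torus `(ℝ/2ℤ)²` minus the point `(o, o)`, starting at a small loop around
that point, cannot end in a loop all of whose lifts to `ℝ²` have a continuous logarithm
relative to `(o, o)`. -/
lemma torus_homotopy_obstruction (o : ℝ) (H₁ H₂ : C(unitInterval × Circle, AddCircle (2 : ℝ)))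
    (hne : ∀ x, ¬ (H₁ x = (o : AddCircle (2 : ℝ)) ∧ H₂ x = (o : AddCircle (2 : ℝ))))
    (ρ : C(Circle, ℝ)) (hρ : ∀ w, 0 < ρ w)
    (h₁ : ∀ w : Circle, H₁ (0, w) = ((o + ρ w * (w : ℂ).re : ℝ) : AddCircle (2 : ℝ)))
    (h₂ : ∀ w : Circle, H₂ (0, w) = ((o + ρ w * (w : ℂ).im : ℝ) : AddCircle (2 : ℝ)))
    (hend : ∀ e₁ e₂ : C(Circle, ℝ), (∀ w, (e₁ w : AddCircle (2 : ℝ)) = H₁ (1, w)) →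
      (∀ w, (e₂ w : AddCircle (2 : ℝ)) = H₂ (1, w)) →
      ∃ l : C(Circle, ℂ), ∀ w, Complex.exp (l w) = ⟨e₁ w - o, e₂ w - o⟩) : False := by
  have cov := AddCircle.isCoveringMap_coe (2 : ℝ)
  let c₁ : C(Circle, ℝ) := ⟨fun w => o + ρ w * (w : ℂ).re, by fun_prop⟩
  let c₂ : C(Circle, ℝ) := ⟨fun w => o + ρ w * (w : ℂ).im, by fun_prop⟩
  let K₁ := cov.liftHomotopy H₁ c₁ h₁
  let K₂ := cov.liftHomotopy H₂ c₂ h₂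
  have k₁ : ∀ x, (K₁ x : AddCircle (2 : ℝ)) = H₁ x :=
    congrFun (cov.liftHomotopy_lifts H₁ c₁ h₁)
  have k₂ : ∀ x, (K₂ x : AddCircle (2 : ℝ)) = H₂ x :=
    congrFun (cov.liftHomotopy_lifts H₂ c₂ h₂)
  obtain ⟨l, hl⟩ := hend ⟨fun w => K₁ (1, w), by fun_prop⟩ ⟨fun w => K₂ (1, w), by fun_prop⟩
    (fun w => k₁ _) (fun w => k₂ _)
  let G : C(unitInterval × Circle, ℂ) :=
    ⟨fun x => ((K₁ x - o : ℝ) : ℂ) + ((K₂ x - o : ℝ) : ℂ) * Complex.I, by fun_prop⟩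
  have hG : ∀ x, G x = ⟨K₁ x - o, K₂ x - o⟩ := by
    intro x
    apply Complex.ext <;> simp [G]
  have hG0 : ∀ x, G x ≠ 0 := by
    intro x hx
    rw [hG, Complex.ext_iff] at hx
    apply hne x
    rw [← k₁, ← k₂]
    simp only [Complex.zero_re, Complex.zero_im] at hx
    rw [sub_eq_zero.1 hx.1, sub_eq_zero.1 hx.2]
    exact ⟨rfl, rfl⟩
  obtain ⟨l', hl'⟩ := exists_log_of_homotopy G hG0 l (fun w => by rw [hl, hG]; rfl)
  refine no_log_circle ρ hρ l' fun w => ?_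
  rw [hl', hG]
  have e₁ : K₁ (0, w) = o + ρ w * (w : ℂ).re := cov.liftHomotopy_zero H₁ c₁ h₁ w
  have e₂ : K₂ (0, w) = o + ρ w * (w : ℂ).im := cov.liftHomotopy_zero H₂ c₂ h₂ w
  rw [e₁, e₂]
  apply Complex.ext <;> simp

lemma sqRadius_max_pos (w : Circle) : 0 < max |(w : ℂ).re| |(w : ℂ).im| := by
  by_contra! h
  have h1 := (le_max_left |(w : ℂ).re| |(w : ℂ).im|).trans h
  have h2 := (le_max_right |(w : ℂ).re| |(w : ℂ).im|).trans h
  have h3 : (w : ℂ) = 0 := Complex.ext (abs_nonpos_iff.1 h1) (abs_nonpos_iff.1 h2)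
  exact Circle.coe_ne_zero w h3

/-- Radial factor carrying the round unit circle to the sup-norm circle `Circle1`. -/
def sqRadius : C(Circle, ℝ) :=
  ⟨fun w => (max |(w : ℂ).re| |(w : ℂ).im|)⁻¹,
    Continuous.inv₀ (by fun_prop) fun w => (sqRadius_max_pos w).ne'⟩

lemma sqRadius_pos (w : Circle) : 0 < sqRadius w := inv_pos.2 (sqRadius_max_pos w)

/-- First coordinate of the parametrization of the sup-norm circle `Circle1`. -/
def sqX : C(Circle, ℝ) := ⟨fun w => sqRadius w * (w : ℂ).re, by fun_prop⟩

/-- Second coordinate of the parametrization of the sup-norm circle `Circle1`. -/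
def sqY : C(Circle, ℝ) := ⟨fun w => sqRadius w * (w : ℂ).im, by fun_prop⟩

lemma sq_max (w : Circle) : max |sqX w| |sqY w| = 1 := by
  have h := sqRadius_pos w
  simp only [sqX, sqY, ContinuousMap.coe_mk, abs_mul, abs_of_pos h]
  rw [← mul_max_of_nonneg _ _ h.le]
  exact inv_mul_cancel₀ (sqRadius_max_pos w).ne'

lemma sq_bounds (w : Circle) : |sqX w| ≤ 1 ∧ |sqY w| ≤ 1 ∧ (|sqX w| = 1 ∨ |sqY w| = 1) := by
  have h := sq_max w
  refine ⟨h ▸ le_max_left _ _, h ▸ le_max_right _ _, ?_⟩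
  rcases max_choice |sqX w| |sqY w| with h' | h' <;> rw [h'] at h <;> simp [h]

instance : ConnectedSpace Circle := by
  have : Function.Surjective Circle.exp := fun w => ⟨_, Circle.exp_arg w⟩
  exact this.connectedSpace Circle.exp.continuous

/-- If `(P, Q)` maps the region `U` into the torus minus `(o, o)` and the loop `k` in `U` to a
square around that point, then no isotopy keeping `k` in `U` carries `k` onto a curve lying in an
embedded disk in `U`. -/
lemma no_disk_of_winding {T : Type*} [TopologicalSpace T] [T2Space T] (U : Set T)
    (P Q : C(T, AddCircle (2 : ℝ))) (o r : ℝ) (hr : 0 < r)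
    (hU : ∀ p ∈ U, ¬ (P p = (o : AddCircle (2 : ℝ)) ∧ Q p = (o : AddCircle (2 : ℝ))))
    (k : C(Circle, T))
    (hP : ∀ w, P (k w) = ((o + r * sqX w : ℝ) : AddCircle (2 : ℝ)))
    (hQ : ∀ w, Q (k w) = ((o + r * sqY w : ℝ) : AddCircle (2 : ℝ)))
    (F : ℝ → T ≃ₜ T) (hF : Continuous fun p : ℝ × T => F p.1 p.2)
    (hF0 : F 0 = Homeomorph.refl T) (hFU : ∀ t w, F t (k w) ∈ U)
    (f : ℝ × ℝ → T) (hf : ContinuousOn f Disk2) (hfi : InjOn f Disk2)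
    (hfU : f '' Disk2 ⊆ U) (hfk : ∀ w, F 1 (k w) ∈ f '' Disk2) : False := by
  have hcomp : IsCompact Disk2 := isCompact_closedBall _ _
  have : CompactSpace Disk2 := isCompact_iff_compactSpace.1 hcomp
  let u : Disk2 → T := Disk2.domRestrict f
  have hu : IsClosedEmbedding u :=
    (continuousOn_iff_continuous_domRestrict.1 hf).isClosedEmbedding (injOn_iff_injective.1 hfi)
  have hm : ∀ w, ∃ d : Disk2, u d = F 1 (k w) := fun w => by
    obtain ⟨d, hd, h⟩ := hfk w
    exact ⟨⟨d, hd⟩, h⟩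
  choose m hm using hm
  have hmc : Continuous m := by
    rw [hu.isEmbedding.continuous_iff]
    have h1 : Continuous fun w => F 1 (k w) := (F 1).continuous.comp k.continuous
    exact h1.congr fun w => (hm w).symm
  let a : C(Circle, U) := ⟨fun w => ⟨k w, by simpa [hF0] using hFU 0 w⟩, by fun_prop⟩
  let b : C(Circle, U) := ⟨fun w => ⟨F 1 (k w), hFU 1 w⟩, by
    have h1 : Continuous fun w => F 1 (k w) := (F 1).continuous.comp k.continuous
    fun_prop⟩
  have hab : a.Homotopic b := ⟨{
    toFun := fun x => ⟨F (x.1 : ℝ) (k x.2), hFU _ _⟩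
    continuous_toFun := by
      have h1 : Continuous fun x : unitInterval × Circle => F (x.1 : ℝ) (k x.2) :=
        hF.comp (f := fun x : unitInterval × Circle => ((x.1 : ℝ), k x.2)) (by fun_prop)
      exact h1.subtype_mk _
    map_zero_left := fun w => by simp [a, hF0]
    map_one_left := fun w => by simp [b] }⟩
  let v : C(Disk2, U) := ⟨fun d => ⟨u d, hfU ⟨d, d.2, rfl⟩⟩, hu.continuous.subtype_mk _⟩
  have hconv : Convex ℝ Disk2 := convex_closedBall _ _
  have h0 : (0 : ℝ × ℝ) ∈ Disk2 := by simp [Disk2]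
  let z : C(Circle, U) := ContinuousMap.const _ (v ⟨0, h0⟩)
  have hbz : b.Homotopic z := ⟨{
    toFun := fun x => v ⟨((1 - x.1 : ℝ)) • (m x.2 : ℝ × ℝ), by
      have := hconv.smul_mem_of_zero_mem h0 (m x.2).2
        (t := 1 - (x.1 : ℝ)) ⟨by linarith [x.1.2.2], by linarith [x.1.2.1]⟩
      exact this⟩
    continuous_toFun := by fun_prop
    map_zero_left := fun w => by
      apply Subtype.ext
      simp [b, v, hm]
    map_one_left := fun w => by simp [z] }⟩
  obtain ⟨H⟩ := hab.trans hbz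
  let H₁ : C(unitInterval × Circle, AddCircle (2 : ℝ)) := ⟨fun x => P (H x : T), by fun_prop⟩
  let H₂ : C(unitInterval × Circle, AddCircle (2 : ℝ)) := ⟨fun x => Q (H x : T), by fun_prop⟩
  have cov := AddCircle.isCoveringMap_coe (2 : ℝ)
  refine torus_homotopy_obstruction o H₁ H₂ (fun x => hU _ (H x).2)
    ⟨fun w => r * sqRadius w, by fun_prop⟩ (fun w => mul_pos hr (sqRadius_pos w)) ?_ ?_ ?_
  · intro w
    simp only [H₁, ContinuousMap.coe_mk, ContinuousMap.Homotopy.apply_zero, a, hP, sqX, mul_assoc]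
  · intro w
    simp only [H₂, ContinuousMap.coe_mk, ContinuousMap.Homotopy.apply_zero, a, hQ, sqY, mul_assoc]
  · intro e₁ e₂ he₁ he₂
    -- a lift of a constant loop is constant
    have c₁ : ∀ w, e₁ w = e₁ 1 := fun w => cov.const_of_comp e₁.continuous (fun w w' => by
      simp only [he₁, H₁, ContinuousMap.coe_mk, ContinuousMap.Homotopy.apply_one, z,
        ContinuousMap.const_apply]) w 1
    have c₂ : ∀ w, e₂ w = e₂ 1 := fun w => cov.const_of_comp e₂.continuous (fun w w' => by
      simp only [he₂, H₂, ContinuousMap.coe_mk, ContinuousMap.Homotopy.apply_one, z,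
        ContinuousMap.const_apply]) w 1
    refine ⟨ContinuousMap.const _ (Complex.log ⟨e₁ 1 - o, e₂ 1 - o⟩), fun w => ?_⟩
    rw [c₁ w, c₂ w, ContinuousMap.const_apply, Complex.exp_log]
    intro h
    rw [Complex.ext_iff] at h
    apply hU _ (H (1, 1)).2
    have g₁ : P (H (1, 1)) = e₁ 1 := (he₁ 1).symm
    have g₂ : Q (H (1, 1)) = e₂ 1 := (he₂ 1).symm
    rw [g₁, g₂, sub_eq_zero.1 h.1, sub_eq_zero.1 h.2]
    exact ⟨rfl, rfl⟩

/-- If `(P, Q)` maps the region `U` into the torus minus `(o, o)` and the loop `k` to a square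
around that point, then no isotopy keeping `k` in `U` pulls `k` off the fibre `P = s`, provided
that the pulled-back loop does not meet the segment from `(s, o)` to `(o, o)` either. The reason
is that such a loop misses one of the two horizontal rays issuing from `(o, o)`. -/
lemma no_pull_off {T : Type*} [TopologicalSpace T] (U : Set T)
    (P Q : C(T, AddCircle (2 : ℝ))) (o r s : ℝ) (hr : 0 < r) (hso : s ≤ o)
    (hU : ∀ p ∈ U, ¬ (P p = (o : AddCircle (2 : ℝ)) ∧ Q p = (o : AddCircle (2 : ℝ))))
    (k : C(Circle, T))
    (hP : ∀ w, P (k w) = ((o + r * sqX w : ℝ) : AddCircle (2 : ℝ)))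
    (hQ : ∀ w, Q (k w) = ((o + r * sqY w : ℝ) : AddCircle (2 : ℝ)))
    (F : ℝ → T ≃ₜ T) (hF : Continuous fun p : ℝ × T => F p.1 p.2)
    (hF0 : F 0 = Homeomorph.refl T) (hFU : ∀ t w, F t ((F 1).symm (k w)) ∈ U)
    (hs : ∀ w, P ((F 1).symm (k w)) ≠ (s : AddCircle (2 : ℝ)))
    (hseg : ∀ w, Q ((F 1).symm (k w)) = (o : AddCircle (2 : ℝ)) → ∀ x : ℝ, s ≤ x → x ≤ o →
      P ((F 1).symm (k w)) ≠ (x : AddCircle (2 : ℝ))) : False := by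
  let H : C(unitInterval × Circle, T) :=
    ⟨fun x => F (1 - (x.1 : ℝ)) ((F 1).symm (k x.2)),
      hF.comp (f := fun x : unitInterval × Circle => (1 - (x.1 : ℝ), (F 1).symm (k x.2)))
        (by fun_prop)⟩
  have H0 : ∀ w, H (0, w) = k w := fun w => by simp [H]
  have H1 : ∀ w, H (1, w) = (F 1).symm (k w) := fun w => by simp [H, hF0]
  refine torus_homotopy_obstruction o (P.comp H) (Q.comp H) (fun x => hU _ (hFU _ _))
    ⟨fun w => r * sqRadius w, by fun_prop⟩ (fun w => mul_pos hr (sqRadius_pos w)) ?_ ?_ ?_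
  · intro w
    simp only [ContinuousMap.comp_apply, H0, hP, sqX, ContinuousMap.coe_mk, mul_assoc]
  · intro w
    simp only [ContinuousMap.comp_apply, H0, hQ, sqY, ContinuousMap.coe_mk, mul_assoc]
  · intro e₁ e₂ he₁ he₂
    simp only [ContinuousMap.comp_apply, H1] at he₁ he₂
    have hne : ∀ w, e₁ w ≠ s := fun w h => hs w (by rw [← he₁, h])
    have hdich : (∀ w, s < e₁ w) ∨ (∀ w, e₁ w < s) := by
      by_contra! hcon
      obtain ⟨⟨w, hw⟩, ⟨w', hw'⟩⟩ := hcon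
      obtain ⟨v, hv⟩ := mem_range_of_exists_le_of_exists_ge e₁.continuous ⟨w, hw⟩ ⟨w', hw'⟩
      exact hne v hv
    let g : C(Circle, ℂ) :=
      ⟨fun w => ((e₁ w - o : ℝ) : ℂ) + ((e₂ w - o : ℝ) : ℂ) * Complex.I, by fun_prop⟩
    have hg : ∀ w, g w = ⟨e₁ w - o, e₂ w - o⟩ := by
      intro w
      apply Complex.ext <;> simp [g]
    rcases hdich with h | h
    · have hsl : ∀ w, g w ∈ Complex.slitPlane := by
        intro w
        rw [hg, Complex.mem_slitPlane_iff]
        by_cases h2 : e₂ w = o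
        · left
          by_contra! h3
          refine hseg w (by rw [← he₂, h2]) (e₁ w) (h w).le ?_ (he₁ w).symm
          simpa using h3
        · right
          simpa [sub_eq_zero] using h2
      refine ⟨⟨fun w => Complex.log (g w), ?_⟩, fun w => ?_⟩
      · exact g.continuous.clog hsl
      · rw [ContinuousMap.coe_mk, Complex.exp_log (Complex.slitPlane_ne_zero (hsl w)), hg]
    · have hsl : ∀ w, -g w ∈ Complex.slitPlane := by
        intro w
        rw [hg, Complex.mem_slitPlane_iff]
        left
        simp only [Complex.neg_re]
        linarith [h w]
      refine ⟨⟨fun w => Complex.log (-g w) + Real.pi * Complex.I, ?_⟩, fun w => ?_⟩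
      · exact (g.continuous.neg.clog hsl).add continuous_const
      · rw [ContinuousMap.coe_mk, Complex.exp_add,
          Complex.exp_log (Complex.slitPlane_ne_zero (hsl w)), Complex.exp_pi_mul_I, ← hg]
        ring

/-! ### Coordinates on the circle `ℝ/2ℤ` -/

lemma norm_coe_of_abs_le {t : ℝ} (h : |t| ≤ 1) : ‖(t : AddCircle (2 : ℝ))‖ = |t| :=
  (AddCircle.norm_coe_eq_abs_iff 2 two_ne_zero).2 (by norm_num; exact h)

lemma exists_rep (x : AddCircle (2 : ℝ)) : ∃ t : ℝ, |t| ≤ 1 ∧ (t : AddCircle (2 : ℝ)) = x := by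
  have : Fact ((0 : ℝ) < 2) := ⟨two_pos⟩
  obtain ⟨t, ht, rfl⟩ : x ∈ ((↑) : ℝ → AddCircle (2 : ℝ)) '' Icc (-1) (-1 + 2) := by
    rw [AddCircle.coe_image_Icc_eq]; trivial
  exact ⟨t, abs_le.2 ⟨ht.1, by linarith [ht.2]⟩, rfl⟩

lemma coe_add_two (t : ℝ) : ((t + 2 : ℝ) : AddCircle (2 : ℝ)) = t := AddCircle.coe_add_period 2 t

lemma norm_inner {a : ℝ} (h : |a| ≤ 1) :
    ‖((0 + 1 / 4 * a : ℝ) : AddCircle (2 : ℝ))‖ = |a| / 4 := by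
  rw [norm_coe_of_abs_le] <;> rw [zero_add, abs_mul, abs_of_pos (by norm_num : (0 : ℝ) < 1 / 4)] <;>
    linarith

lemma norm_outer {a : ℝ} (h : |a| ≤ 1) :
    ‖((1 + 3 / 4 * a : ℝ) : AddCircle (2 : ℝ))‖ = 1 - 3 / 4 * |a| := by
  obtain ⟨h1, h2⟩ := abs_le.1 h
  rcases le_total a 0 with ha | ha
  · rw [norm_coe_of_abs_le (abs_le.2 ⟨by linarith, by linarith⟩), abs_of_nonneg (by linarith),
      abs_of_nonpos ha]
    ring
  · rw [show (1 + 3 / 4 * a : ℝ) = (3 / 4 * a - 1) + 2 by ring, coe_add_two,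
      norm_coe_of_abs_le (abs_le.2 ⟨by linarith, by linarith⟩), abs_of_nonpos (by linarith),
      abs_of_nonneg ha]
    ring

lemma norm_le_quarter_iff (x : AddCircle (2 : ℝ)) :
    ‖x‖ ≤ 1 / 4 ↔ ∃ a : ℝ, |a| ≤ 1 ∧ x = ((0 + 1 / 4 * a : ℝ) : AddCircle (2 : ℝ)) := by
  constructor
  · obtain ⟨t, ht, rfl⟩ := exists_rep x
    rw [norm_coe_of_abs_le ht]
    intro h
    refine ⟨4 * t, ?_, by congr 1; ring⟩
    rw [abs_mul, abs_of_pos (by norm_num : (0 : ℝ) < 4)]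
    linarith
  · rintro ⟨a, ha, rfl⟩
    rw [norm_inner ha]
    linarith

lemma quarter_le_norm_iff (x : AddCircle (2 : ℝ)) :
    1 / 4 ≤ ‖x‖ ↔ ∃ a : ℝ, |a| ≤ 1 ∧ x = ((1 + 3 / 4 * a : ℝ) : AddCircle (2 : ℝ)) := by
  constructor
  · obtain ⟨t, ht, rfl⟩ := exists_rep x
    rw [norm_coe_of_abs_le ht]
    intro h
    obtain ⟨h1, h2⟩ := abs_le.1 ht
    rcases le_abs.1 h with h | h
    · exact ⟨(t - 1) * 4 / 3, abs_le.2 ⟨by linarith, by linarith⟩, by congr 1; ring⟩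
    · refine ⟨(t + 1) * 4 / 3, abs_le.2 ⟨by linarith, by linarith⟩, ?_⟩
      rw [← coe_add_two]
      congr 1
      ring
  · rintro ⟨a, ha, rfl⟩
    rw [norm_outer ha]
    linarith

lemma coe_injOn {o r a b : ℝ} (hr : 0 < r) (hr1 : r < 1) (ha : |a| ≤ 1) (hb : |b| ≤ 1)
    (h : ((o + r * a : ℝ) : AddCircle (2 : ℝ)) = ((o + r * b : ℝ) : AddCircle (2 : ℝ))) :
    a = b := by
  have h1 : (((r * (a - b) : ℝ)) : AddCircle (2 : ℝ)) = 0 := by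
    rw [show r * (a - b) = (o + r * a) - (o + r * b) by ring, AddCircle.coe_sub, h, sub_self]
  obtain ⟨n, hn⟩ := (AddCircle.coe_eq_zero_iff (2 : ℝ)).1 h1
  rw [zsmul_eq_mul] at hn
  obtain ⟨a1, a2⟩ := abs_le.1 ha
  obtain ⟨b1, b2⟩ := abs_le.1 hb
  have n1 : (n : ℝ) < 1 := by nlinarith
  have n2 : (-1 : ℝ) < n := by nlinarith
  have n0 : n = 0 := by
    have n1' : n < 1 := by exact_mod_cast n1
    have n2' : -1 < n := by exact_mod_cast n2
    omega
  rw [n0] at hn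
  have : r * (a - b) = 0 := by rw [← hn]; simp
  rcases mul_eq_zero.1 this with h | h
  · exact absurd h hr.ne'
  · linarith

lemma norm_coe_zero' : ‖((0 : ℝ) : AddCircle (2 : ℝ))‖ = 0 := by
  rw [norm_coe_of_abs_le] <;> norm_num

lemma norm_coe_half : ‖((1 / 2 : ℝ) : AddCircle (2 : ℝ))‖ = 1 / 2 := by
  rw [norm_coe_of_abs_le] <;> norm_num [abs_of_pos]

lemma norm_coe_one' : ‖((1 : ℝ) : AddCircle (2 : ℝ))‖ = 1 := by
  rw [norm_coe_of_abs_le] <;> norm_num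

lemma coe_zero_ne_half : ((0 : ℝ) : AddCircle (2 : ℝ)) ≠ ((1 / 2 : ℝ) : AddCircle (2 : ℝ)) := by
  intro h
  have := congrArg norm h
  rw [norm_coe_zero', norm_coe_half] at this
  norm_num at this

/-! ### The handlebodies in coordinates

The metric on `ℝ³` being the sup metric, `V` consists of the points having at least two
coordinates within `1/4` of zero, and `W` of those having at least two at distance at least `1/4`.
-/

lemma cthickening_axes (p : ℝ × ℝ × ℝ) :
    p ∈ Metric.cthickening (1 / 4) Axes ↔ (|p.2.1| ≤ 1 / 4 ∧ |p.2.2| ≤ 1 / 4) ∨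
      (|p.1| ≤ 1 / 4 ∧ |p.2.2| ≤ 1 / 4) ∨ (|p.1| ≤ 1 / 4 ∧ |p.2.1| ≤ 1 / 4) := by
  obtain ⟨x, y, z⟩ := p
  constructor
  · have hcl : IsClosed Axes := by
      refine ((?_ : IsClosed _).union ?_).union ?_ <;>
        exact (isClosed_eq (by fun_prop) (by fun_prop)).inter
          (isClosed_eq (by fun_prop) (by fun_prop))
    rw [hcl.cthickening_eq_biUnion_closedBall (by norm_num)]
    simp only [mem_iUnion, Metric.mem_closedBall]
    rintro ⟨⟨a, b, c⟩, h, hd⟩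
    simp only [Prod.dist_eq, Real.dist_eq, sup_le_iff] at hd
    rcases h with (h | h) | h <;> obtain ⟨h1, h2⟩ := h <;> simp only at h1 h2 <;> subst h1 h2 <;>
      simp only [sub_zero] at hd <;> tauto
  · have hm : ∀ q ∈ Axes, dist (x, y, z) q ≤ 1 / 4 →
        (x, y, z) ∈ Metric.cthickening (1 / 4) Axes :=
      fun q hq hd => Metric.mem_cthickening_of_dist_le _ q _ _ hq hd
    rintro (⟨h1, h2⟩ | ⟨h1, h2⟩ | ⟨h1, h2⟩)
    · exact hm (x, 0, 0) (Or.inl (Or.inl ⟨rfl, rfl⟩))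
        (by simp only [Prod.dist_eq, Real.dist_eq, sub_zero, sub_self, sup_le_iff]
            exact ⟨by norm_num, h1, h2⟩)
    · exact hm (0, y, 0) (Or.inl (Or.inr ⟨rfl, rfl⟩))
        (by simp only [Prod.dist_eq, Real.dist_eq, sub_zero, sub_self, sup_le_iff]
            exact ⟨h1, by norm_num, h2⟩)
    · exact hm (0, 0, z) (Or.inr ⟨rfl, rfl⟩)
        (by simp only [Prod.dist_eq, Real.dist_eq, sub_zero, sub_self, sup_le_iff]
            exact ⟨h1, h2, by norm_num⟩)

lemma mem_Vh (p : T3) : p ∈ Vh ↔ (‖p.2.1‖ ≤ 1 / 4 ∧ ‖p.2.2‖ ≤ 1 / 4) ∨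
      (‖p.1‖ ≤ 1 / 4 ∧ ‖p.2.2‖ ≤ 1 / 4) ∨ (‖p.1‖ ≤ 1 / 4 ∧ ‖p.2.1‖ ≤ 1 / 4) := by
  constructor
  · rintro ⟨⟨x, y, z⟩, ⟨h, hx, hy, hz⟩, rfl⟩
    rw [cthickening_axes] at h
    simp only [qT]
    rw [norm_coe_of_abs_le (abs_le.2 hx), norm_coe_of_abs_le (abs_le.2 hy),
      norm_coe_of_abs_le (abs_le.2 hz)]
    exact h
  · obtain ⟨x, y, z⟩ := p
    obtain ⟨x, hx, rfl⟩ := exists_rep x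
    obtain ⟨y, hy, rfl⟩ := exists_rep y
    obtain ⟨z, hz, rfl⟩ := exists_rep z
    simp only
    rw [norm_coe_of_abs_le hx, norm_coe_of_abs_le hy, norm_coe_of_abs_le hz]
    intro h
    exact ⟨(x, y, z), ⟨(cthickening_axes _).2 h, abs_le.1 hx, abs_le.1 hy, abs_le.1 hz⟩, rfl⟩

lemma isClosed_two_of_three {A B C : T3 → Prop} (hA : IsClosed {p | A p})
    (hB : IsClosed {p | B p}) (hC : IsClosed {p | C p}) :
    IsClosed {p | (B p ∧ C p) ∨ (A p ∧ C p) ∨ (A p ∧ B p)} :=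
  (hB.inter hC).union ((hA.inter hC).union (hA.inter hB))

lemma isClosed_Vh : IsClosed Vh := by
  have : Vh = {p : T3 | (‖p.2.1‖ ≤ 1 / 4 ∧ ‖p.2.2‖ ≤ 1 / 4) ∨
      (‖p.1‖ ≤ 1 / 4 ∧ ‖p.2.2‖ ≤ 1 / 4) ∨ (‖p.1‖ ≤ 1 / 4 ∧ ‖p.2.1‖ ≤ 1 / 4)} := ext mem_Vh
  rw [this]
  exact isClosed_two_of_three (isClosed_le (by fun_prop) (by fun_prop))
    (isClosed_le (by fun_prop) (by fun_prop)) (isClosed_le (by fun_prop) (by fun_prop))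

lemma mem_closure_quarter_lt {x : AddCircle (2 : ℝ)} (hx : 1 / 4 ≤ ‖x‖) :
    x ∈ closure {y : AddCircle (2 : ℝ) | 1 / 4 < ‖y‖} := by
  obtain ⟨a, ha, rfl⟩ := (quarter_le_norm_iff x).1 hx
  have h1 : a ∈ closure (Ioo (-1 : ℝ) 1) := by
    rw [closure_Ioo (by norm_num)]; exact abs_le.1 ha
  have hc : Continuous fun a : ℝ => ((1 + 3 / 4 * a : ℝ) : AddCircle (2 : ℝ)) :=
    (AddCircle.continuous_mk' 2).comp (by fun_prop)
  refine closure_mono ?_ (image_closure_subset_closure_image hc ⟨a, h1, rfl⟩)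
  rintro _ ⟨b, hb, rfl⟩
  have hb' : |b| < 1 := abs_lt.2 hb
  change 1 / 4 < ‖((1 + 3 / 4 * b : ℝ) : AddCircle (2 : ℝ))‖
  rw [norm_outer hb'.le]
  linarith

lemma mem_Wh (p : T3) : p ∈ Wh ↔ (1 / 4 ≤ ‖p.2.1‖ ∧ 1 / 4 ≤ ‖p.2.2‖) ∨
      (1 / 4 ≤ ‖p.1‖ ∧ 1 / 4 ≤ ‖p.2.2‖) ∨ (1 / 4 ≤ ‖p.1‖ ∧ 1 / 4 ≤ ‖p.2.1‖) := by
  constructor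
  · have hcl : IsClosed {p : T3 | (1 / 4 ≤ ‖p.2.1‖ ∧ 1 / 4 ≤ ‖p.2.2‖) ∨
      (1 / 4 ≤ ‖p.1‖ ∧ 1 / 4 ≤ ‖p.2.2‖) ∨ (1 / 4 ≤ ‖p.1‖ ∧ 1 / 4 ≤ ‖p.2.1‖)} := by
      exact isClosed_two_of_three (isClosed_le (by fun_prop) (by fun_prop))
        (isClosed_le (by fun_prop) (by fun_prop)) (isClosed_le (by fun_prop) (by fun_prop))
    refine fun h => closure_minimal ?_ hcl h
    intro q hq
    rw [mem_compl_iff, mem_Vh] at hq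
    simp only [mem_ofPred_eq]
    by_contra hcon
    grind
  · obtain ⟨x, y, z⟩ := p
    set O : Set (AddCircle (2 : ℝ)) := {y | 1 / 4 < ‖y‖} with hO
    have key : ∀ A B C : Set (AddCircle (2 : ℝ)), x ∈ closure A → y ∈ closure B →
        z ∈ closure C → A ×ˢ B ×ˢ C ⊆ Vhᶜ → (x, y, z) ∈ Wh := by
      intro A B C hA hB hC hsub
      refine closure_mono hsub ?_
      rw [closure_prod_eq, closure_prod_eq]
      exact ⟨hA, hB, hC⟩
    rintro (⟨h1, h2⟩ | ⟨h1, h2⟩ | ⟨h1, h2⟩)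
    · refine key univ O O (subset_closure trivial) (mem_closure_quarter_lt h1)
        (mem_closure_quarter_lt h2) ?_
      rintro q ⟨-, hb, hc⟩
      rw [mem_compl_iff, mem_Vh]
      simp only [hO, mem_ofPred_eq] at hb hc
      grind
    · refine key O univ O (mem_closure_quarter_lt h1) (subset_closure trivial)
        (mem_closure_quarter_lt h2) ?_
      rintro q ⟨hb, -, hc⟩
      rw [mem_compl_iff, mem_Vh]
      simp only [hO, mem_ofPred_eq] at hb hc
      grind
    · refine key O O univ (mem_closure_quarter_lt h1) (mem_closure_quarter_lt h2)
        (subset_closure trivial) ?_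
      rintro q ⟨hb, hc, -⟩
      rw [mem_compl_iff, mem_Vh]
      simp only [hO, mem_ofPred_eq] at hb hc
      grind

lemma Sh_eq : Sh = Vh ∩ Wh := by
  rw [Sh, frontier_eq_closure_inter_closure, isClosed_Vh.closure_eq, Wh]

lemma mem_slice_z (c : ℝ) (hc : |c| ≤ 1) (p : T3) :
    p ∈ qT '' ({p | p.2.2 = c} ∩ Cube) ↔ p.2.2 = (c : AddCircle (2 : ℝ)) := by
  constructor
  · rintro ⟨⟨x, y, z⟩, ⟨h, -⟩, rfl⟩
    simp only [mem_ofPred_eq] at h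
    simp [qT, h]
  · obtain ⟨x, y, z⟩ := p
    obtain ⟨x, hx, rfl⟩ := exists_rep x
    obtain ⟨y, hy, rfl⟩ := exists_rep y
    rintro rfl
    exact ⟨(x, y, c), ⟨rfl, abs_le.1 hx, abs_le.1 hy, abs_le.1 hc⟩, rfl⟩

lemma mem_slice_x (c : ℝ) (hc : |c| ≤ 1) (p : T3) :
    p ∈ qT '' ({p | p.1 = c} ∩ Cube) ↔ p.1 = (c : AddCircle (2 : ℝ)) := by
  constructor
  · rintro ⟨⟨x, y, z⟩, ⟨h, -⟩, rfl⟩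
    simp only [mem_ofPred_eq] at h
    simp [qT, h]
  · obtain ⟨x, y, z⟩ := p
    obtain ⟨z, hz, rfl⟩ := exists_rep z
    obtain ⟨y, hy, rfl⟩ := exists_rep y
    rintro rfl
    exact ⟨(c, y, z), ⟨rfl, abs_le.1 hc, abs_le.1 hy, abs_le.1 hz⟩, rfl⟩

lemma mem_Dd (p : T3) : p ∈ Dd ↔ p.2.2 = ((1 / 2 : ℝ) : AddCircle (2 : ℝ)) ∧
    ‖p.1‖ ≤ 1 / 4 ∧ ‖p.2.1‖ ≤ 1 / 4 := by
  rw [Dd, mem_inter_iff, mem_slice_z _ (by norm_num [abs_of_pos]), mem_Vh]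
  refine and_congr_right fun h => ?_
  rw [h, norm_coe_half]
  norm_num

lemma mem_Ee (p : T3) : p ∈ Ee ↔ p.2.2 = ((0 : ℝ) : AddCircle (2 : ℝ)) ∧
    1 / 4 ≤ ‖p.1‖ ∧ 1 / 4 ≤ ‖p.2.1‖ := by
  rw [Ee, mem_inter_iff, mem_slice_z _ (by norm_num), mem_Wh]
  refine and_congr_right fun h => ?_
  rw [h, norm_coe_zero']
  norm_num

lemma mem_Dd' (p : T3) : p ∈ Dd' ↔ p.1 = ((1 / 2 : ℝ) : AddCircle (2 : ℝ)) ∧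
    ‖p.2.1‖ ≤ 1 / 4 ∧ ‖p.2.2‖ ≤ 1 / 4 := by
  rw [Dd', mem_inter_iff, mem_slice_x _ (by norm_num [abs_of_pos]), mem_Vh]
  refine and_congr_right fun h => ?_
  rw [h, norm_coe_half]
  norm_num

lemma mem_Ee' (p : T3) : p ∈ Ee' ↔ p.1 = ((0 : ℝ) : AddCircle (2 : ℝ)) ∧
    1 / 4 ≤ ‖p.2.1‖ ∧ 1 / 4 ≤ ‖p.2.2‖ := by
  rw [Ee', mem_inter_iff, mem_slice_x _ (by norm_num), mem_Wh]
  refine and_congr_right fun h => ?_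
  rw [h, norm_coe_zero']
  norm_num

/-! ### The four disks -/

lemma ambIsotopicIn_refl (γ S : Set X) : AmbIsotopicIn γ γ S :=
  ⟨fun _ => Homeomorph.refl X, continuous_snd, rfl, fun _ => image_id _, image_id _⟩

lemma mem_Disk2 (p : ℝ × ℝ) : p ∈ Disk2 ↔ |p.1| ≤ 1 ∧ |p.2| ≤ 1 := by
  rw [Disk2, Metric.mem_closedBall, dist_zero_right, Prod.norm_def, sup_le_iff]
  rfl

lemma mem_Circle1 (p : ℝ × ℝ) :
    p ∈ Circle1 ↔ (|p.1| ≤ 1 ∧ |p.2| ≤ 1) ∧ (|p.1| = 1 ∨ |p.2| = 1) := by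
  rw [Circle1, Metric.mem_sphere, dist_zero_right, Prod.norm_def, Real.norm_eq_abs,
    Real.norm_eq_abs]
  constructor
  · intro h
    refine ⟨⟨h ▸ le_max_left _ _, h ▸ le_max_right _ _⟩, ?_⟩
    rcases max_choice |p.1| |p.2| with h' | h' <;> rw [h'] at h <;> simp [h]
  · rintro ⟨⟨h1, h2⟩, h | h⟩
    · rw [h]; exact max_eq_left h2
    · rw [h]; exact max_eq_right h1

/-- A flat square disk `Δ ⊆ A` of half side `r` centred at `(o, o)` in a coordinate plane of the
torus is essential as soon as the projection of the other side `U` to that plane misses `(o, o)`;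
moreover no curve isotopic to `∂Δ` on the surface bounds a disk in `U`. -/
lemma square_disk (Δ A U : Set T3) (ι : AddCircle (2 : ℝ) → AddCircle (2 : ℝ) → T3)
    (hι : Continuous fun x : AddCircle (2 : ℝ) × AddCircle (2 : ℝ) => ι x.1 x.2)
    (P Q : C(T3, AddCircle (2 : ℝ))) (hPι : ∀ a b, P (ι a b) = a) (hQι : ∀ a b, Q (ι a b) = b)
    (o r : ℝ) (hr : 0 < r) (hr1 : r < 1)
    (hΔ : ∀ p, p ∈ Δ ↔ ∃ a b : ℝ, (|a| ≤ 1 ∧ |b| ≤ 1) ∧ p = ι (o + r * a : ℝ) (o + r * b : ℝ))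
    (hΔA : Δ ⊆ A)
    (hS : ∀ a b : ℝ, |a| ≤ 1 → |b| ≤ 1 →
      (ι (o + r * a : ℝ) (o + r * b : ℝ) ∈ Sh ↔ |a| = 1 ∨ |b| = 1))
    (hSU : Sh ⊆ U)
    (hU : ∀ p ∈ U, ¬ (P p = (o : AddCircle (2 : ℝ)) ∧ Q p = (o : AddCircle (2 : ℝ)))) :
    IsEssentialDisk Δ A Sh ∧ IsSCC (Δ ∩ Sh) ∧
      ∀ γ' Δ', AmbIsotopicIn (Δ ∩ Sh) γ' Sh → IsProperDisk Δ' U Sh → Δ' ∩ Sh = γ' → False := by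
  let k : C(Circle, T3) := ⟨fun w => ι (o + r * sqX w : ℝ) (o + r * sqY w : ℝ),
    hι.comp (((AddCircle.continuous_mk' 2).comp (by fun_prop : Continuous fun w => o + r * sqX w)).prodMk
      ((AddCircle.continuous_mk' 2).comp (by fun_prop : Continuous fun w => o + r * sqY w)))⟩
  have hkγ : ∀ w, k w ∈ Δ ∩ Sh := fun w => by
    obtain ⟨h1, h2, h3⟩ := sq_bounds w
    exact ⟨(hΔ _).2 ⟨_, _, ⟨h1, h2⟩, rfl⟩, (hS _ _ h1 h2).2 h3⟩
  let f : ℝ × ℝ → T3 := fun x => ι (o + r * x.1 : ℝ) (o + r * x.2 : ℝ)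
  have hf : Continuous f :=
    hι.comp (((AddCircle.continuous_mk' 2).comp
      (by fun_prop : Continuous fun x : ℝ × ℝ => o + r * x.1)).prodMk
      ((AddCircle.continuous_mk' 2).comp
      (by fun_prop : Continuous fun x : ℝ × ℝ => o + r * x.2)))
  have hfi : InjOn f Disk2 := by
    intro x hx y hy h
    rw [mem_Disk2] at hx hy
    have h1 := congrArg P h
    have h2 := congrArg Q h
    simp only [f, hPι, hQι] at h1 h2
    exact Prod.ext (coe_injOn hr hr1 hx.1 hy.1 h1) (coe_injOn hr hr1 hx.2 hy.2 h2)
  have hCD : Circle1 ⊆ Disk2 := Metric.sphere_subset_closedBall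
  have hfD : f '' Disk2 = Δ := by
    ext p
    rw [hΔ]
    constructor
    · rintro ⟨x, hx, rfl⟩
      exact ⟨x.1, x.2, (mem_Disk2 _).1 hx, rfl⟩
    · rintro ⟨a, b, h, rfl⟩
      exact ⟨(a, b), (mem_Disk2 _).2 h, rfl⟩
  have hfC : f '' Circle1 = Δ ∩ Sh := by
    ext p
    constructor
    · rintro ⟨x, hx, rfl⟩
      obtain ⟨h1, h2⟩ := (mem_Circle1 _).1 hx
      exact ⟨hfD ▸ ⟨x, hCD hx, rfl⟩, (hS _ _ h1.1 h1.2).2 h2⟩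
    · rintro ⟨h1, h2⟩
      obtain ⟨a, b, h, rfl⟩ := (hΔ _).1 h1
      exact ⟨(a, b), (mem_Circle1 _).2 ⟨h, (hS _ _ h.1 h.2).1 h2⟩, rfl⟩
  have hint : f '' (Disk2 \ Circle1) ⊆ A \ Sh := by
    rintro _ ⟨x, ⟨hx, hx'⟩, rfl⟩
    refine ⟨hΔA (hfD ▸ ⟨x, hx, rfl⟩), fun h => hx' ?_⟩
    have hx2 := (mem_Disk2 _).1 hx
    exact (mem_Circle1 _).2 ⟨hx2, (hS _ _ hx2.1 hx2.2).1 h⟩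
  have hP : ∀ w, P (k w) = ((o + r * sqX w : ℝ) : AddCircle (2 : ℝ)) := fun w => hPι _ _
  have hQ : ∀ w, Q (k w) = ((o + r * sqY w : ℝ) : AddCircle (2 : ℝ)) := fun w => hQι _ _
  refine ⟨⟨⟨f, hf.continuousOn, hfi, hfD, hΔA, hfC, hint⟩, ?_⟩,
    ⟨f, hf.continuousOn, hfi.mono hCD, hfC⟩, ?_⟩
  · rintro ⟨g, hg, hgi, hgS, hgγ⟩
    refine no_disk_of_winding U P Q o r hr hU k hP hQ (fun _ => Homeomorph.refl T3)
      continuous_snd rfl (fun t w => hSU (hkγ w).2) g hg hgi (hgS.trans hSU) fun w => ?_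
    have : k w ∈ g '' Circle1 := hgγ ▸ hkγ w
    exact image_mono hCD this
  · rintro γ' Δ' ⟨F, hF, hF0, hFS, hF1⟩ ⟨g, hg, hgi, hgD, hDU, hgC, -⟩ hγ'
    refine no_disk_of_winding U P Q o r hr hU k hP hQ F hF hF0 (fun t w => hSU ?_) g hg hgi
      (hgD ▸ hDU) fun w => ?_
    · rw [← hFS t]
      exact mem_image_of_mem _ (hkγ w).2
    · have : F 1 (k w) ∈ γ' := hF1 ▸ mem_image_of_mem _ (hkγ w)
      rw [← hγ'] at this
      exact hgD ▸ this.1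

lemma Sh_subset_Vh : Sh ⊆ Vh := Sh_eq ▸ inter_subset_left

lemma Sh_subset_Wh : Sh ⊆ Wh := Sh_eq ▸ inter_subset_right

/-- The projection of the torus to its first coordinate. -/
def prX : C(T3, AddCircle (2 : ℝ)) := ⟨fun p => p.1, by fun_prop⟩

/-- The projection of the torus to its second coordinate. -/
def prY : C(T3, AddCircle (2 : ℝ)) := ⟨fun p => p.2.1, by fun_prop⟩

/-- The projection of the torus to its third coordinate. -/
def prZ : C(T3, AddCircle (2 : ℝ)) := ⟨fun p => p.2.2, by fun_prop⟩

lemma Wh_avoid_xy (p : T3) (hp : p ∈ Wh) :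
    ¬ (prX p = ((0 : ℝ) : AddCircle (2 : ℝ)) ∧ prY p = ((0 : ℝ) : AddCircle (2 : ℝ))) := by
  rintro ⟨h1, h2⟩
  change p.1 = _ at h1
  change p.2.1 = _ at h2
  rw [mem_Wh, h1, h2, norm_coe_zero'] at hp
  norm_num at hp

lemma Wh_avoid_yz (p : T3) (hp : p ∈ Wh) :
    ¬ (prY p = ((0 : ℝ) : AddCircle (2 : ℝ)) ∧ prZ p = ((0 : ℝ) : AddCircle (2 : ℝ))) := by
  rintro ⟨h1, h2⟩
  change p.2.1 = _ at h1
  change p.2.2 = _ at h2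
  rw [mem_Wh, h1, h2, norm_coe_zero'] at hp
  norm_num at hp

lemma Vh_avoid_xy (p : T3) (hp : p ∈ Vh) :
    ¬ (prX p = ((1 : ℝ) : AddCircle (2 : ℝ)) ∧ prY p = ((1 : ℝ) : AddCircle (2 : ℝ))) := by
  rintro ⟨h1, h2⟩
  change p.1 = _ at h1
  change p.2.1 = _ at h2
  rw [mem_Vh, h1, h2, norm_coe_one'] at hp
  norm_num at hp

lemma Vh_avoid_yz (p : T3) (hp : p ∈ Vh) :
    ¬ (prY p = ((1 : ℝ) : AddCircle (2 : ℝ)) ∧ prZ p = ((1 : ℝ) : AddCircle (2 : ℝ))) := by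
  rintro ⟨h1, h2⟩
  change p.2.1 = _ at h1
  change p.2.2 = _ at h2
  rw [mem_Vh, h1, h2, norm_coe_one'] at hp
  norm_num at hp

lemma Dd_square : IsEssentialDisk Dd Vh Sh ∧ IsSCC (Dd ∩ Sh) ∧
    ∀ γ' Δ', AmbIsotopicIn (Dd ∩ Sh) γ' Sh → IsProperDisk Δ' Wh Sh → Δ' ∩ Sh = γ' → False := by
  refine square_disk Dd Vh Wh (fun a b => (a, b, ((1 / 2 : ℝ) : AddCircle (2 : ℝ)))) (by fun_prop)
    prX prY (fun _ _ => rfl) (fun _ _ => rfl) 0 (1 / 4) (by norm_num) (by norm_num) ?_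
    inter_subset_right ?_ Sh_subset_Wh Wh_avoid_xy
  · rintro ⟨x, y, z⟩
    rw [mem_Dd, norm_le_quarter_iff, norm_le_quarter_iff]
    constructor
    · rintro ⟨rfl, ⟨a, ha, rfl⟩, b, hb, rfl⟩
      exact ⟨a, b, ⟨ha, hb⟩, rfl⟩
    · rintro ⟨a, b, ⟨ha, hb⟩, h⟩
      obtain ⟨rfl, rfl, rfl⟩ : x = _ ∧ y = _ ∧ z = _ := by simpa only [Prod.mk.injEq] using h
      exact ⟨rfl, ⟨a, ha, rfl⟩, b, hb, rfl⟩
  · intro a b ha hb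
    rw [Sh_eq, mem_inter_iff, mem_Vh, mem_Wh, norm_inner ha, norm_inner hb, norm_coe_half]
    generalize |a| = a at *
    generalize |b| = b at *
    grind

lemma Ee_square : IsEssentialDisk Ee Wh Sh ∧ IsSCC (Ee ∩ Sh) ∧
    ∀ γ' Δ', AmbIsotopicIn (Ee ∩ Sh) γ' Sh → IsProperDisk Δ' Vh Sh → Δ' ∩ Sh = γ' → False := by
  refine square_disk Ee Wh Vh (fun a b => (a, b, ((0 : ℝ) : AddCircle (2 : ℝ)))) (by fun_prop)
    prX prY (fun _ _ => rfl) (fun _ _ => rfl) 1 (3 / 4) (by norm_num) (by norm_num) ?_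
    inter_subset_right ?_ Sh_subset_Vh Vh_avoid_xy
  · rintro ⟨x, y, z⟩
    rw [mem_Ee, quarter_le_norm_iff, quarter_le_norm_iff]
    constructor
    · rintro ⟨rfl, ⟨a, ha, rfl⟩, b, hb, rfl⟩
      exact ⟨a, b, ⟨ha, hb⟩, rfl⟩
    · rintro ⟨a, b, ⟨ha, hb⟩, h⟩
      obtain ⟨rfl, rfl, rfl⟩ : x = _ ∧ y = _ ∧ z = _ := by simpa only [Prod.mk.injEq] using h
      exact ⟨rfl, ⟨a, ha, rfl⟩, b, hb, rfl⟩
  · intro a b ha hb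
    rw [Sh_eq, mem_inter_iff, mem_Vh, mem_Wh, norm_outer ha, norm_outer hb, norm_coe_zero']
    generalize |a| = a at *
    generalize |b| = b at *
    grind

lemma Dd'_square : IsEssentialDisk Dd' Vh Sh ∧ IsSCC (Dd' ∩ Sh) ∧
    ∀ γ' Δ', AmbIsotopicIn (Dd' ∩ Sh) γ' Sh → IsProperDisk Δ' Wh Sh → Δ' ∩ Sh = γ' → False := by
  refine square_disk Dd' Vh Wh (fun a b => (((1 / 2 : ℝ) : AddCircle (2 : ℝ)), a, b)) (by fun_prop)
    prY prZ (fun _ _ => rfl) (fun _ _ => rfl) 0 (1 / 4) (by norm_num) (by norm_num) ?_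
    inter_subset_right ?_ Sh_subset_Wh Wh_avoid_yz
  · rintro ⟨x, y, z⟩
    rw [mem_Dd', norm_le_quarter_iff, norm_le_quarter_iff]
    constructor
    · rintro ⟨rfl, ⟨a, ha, rfl⟩, b, hb, rfl⟩
      exact ⟨a, b, ⟨ha, hb⟩, rfl⟩
    · rintro ⟨a, b, ⟨ha, hb⟩, h⟩
      obtain ⟨rfl, rfl, rfl⟩ : x = _ ∧ y = _ ∧ z = _ := by simpa only [Prod.mk.injEq] using h
      exact ⟨rfl, ⟨a, ha, rfl⟩, b, hb, rfl⟩
  · intro a b ha hb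
    rw [Sh_eq, mem_inter_iff, mem_Vh, mem_Wh, norm_inner ha, norm_inner hb, norm_coe_half]
    generalize |a| = a at *
    generalize |b| = b at *
    grind

lemma Ee'_square : IsEssentialDisk Ee' Wh Sh ∧ IsSCC (Ee' ∩ Sh) ∧
    ∀ γ' Δ', AmbIsotopicIn (Ee' ∩ Sh) γ' Sh → IsProperDisk Δ' Vh Sh → Δ' ∩ Sh = γ' → False := by
  refine square_disk Ee' Wh Vh (fun a b => (((0 : ℝ) : AddCircle (2 : ℝ)), a, b)) (by fun_prop)
    prY prZ (fun _ _ => rfl) (fun _ _ => rfl) 1 (3 / 4) (by norm_num) (by norm_num) ?_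
    inter_subset_right ?_ Sh_subset_Vh Vh_avoid_yz
  · rintro ⟨x, y, z⟩
    rw [mem_Ee', quarter_le_norm_iff, quarter_le_norm_iff]
    constructor
    · rintro ⟨rfl, ⟨a, ha, rfl⟩, b, hb, rfl⟩
      exact ⟨a, b, ⟨ha, hb⟩, rfl⟩
    · rintro ⟨a, b, ⟨ha, hb⟩, h⟩
      obtain ⟨rfl, rfl, rfl⟩ : x = _ ∧ y = _ ∧ z = _ := by simpa only [Prod.mk.injEq] using h
      exact ⟨rfl, ⟨a, ha, rfl⟩, b, hb, rfl⟩
  · intro a b ha hb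
    rw [Sh_eq, mem_inter_iff, mem_Vh, mem_Wh, norm_outer ha, norm_outer hb, norm_coe_zero']
    generalize |a| = a at *
    generalize |b| = b at *
    grind

/-- `∂D'` cannot be isotoped off `∂E`: otherwise `∂E` could be isotoped on `S ⊆ V` off the fibre
`x = 1/2`, which meets `S` exactly in `∂D'`. -/
lemma Dd'_not_off_Ee (γ' Δ : Set T3) (h : AmbIsotopicIn (Dd' ∩ Sh) γ' Sh) (hΔ : Δ ∩ Sh = γ')
    (hdisj : Disjoint Δ Ee) : False := by
  obtain ⟨F, hF, hF0, hFS, hF1⟩ := h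
  let k : C(Circle, T3) := ⟨fun w => (((1 + 3 / 4 * sqX w : ℝ) : AddCircle (2 : ℝ)),
      ((1 + 3 / 4 * sqY w : ℝ) : AddCircle (2 : ℝ)), ((0 : ℝ) : AddCircle (2 : ℝ))),
    ((AddCircle.continuous_mk' 2).comp
      (by fun_prop : Continuous fun w => 1 + 3 / 4 * sqX w)).prodMk
      (((AddCircle.continuous_mk' 2).comp
        (by fun_prop : Continuous fun w => 1 + 3 / 4 * sqY w)).prodMk continuous_const)⟩
  have hkE : ∀ w, k w ∈ Ee := fun w => by
    obtain ⟨h1, h2, -⟩ := sq_bounds w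
    have e1 : ‖(k w).1‖ = 1 - 3 / 4 * |sqX w| := norm_outer h1
    have e2 : ‖(k w).2.1‖ = 1 - 3 / 4 * |sqY w| := norm_outer h2
    rw [mem_Ee, e1, e2]
    exact ⟨rfl, by linarith, by linarith⟩
  have hkS : ∀ w, k w ∈ Sh := fun w => by
    obtain ⟨h1, h2, h3⟩ := sq_bounds w
    have e1 : ‖(k w).1‖ = 1 - 3 / 4 * |sqX w| := norm_outer h1
    have e2 : ‖(k w).2.1‖ = 1 - 3 / 4 * |sqY w| := norm_outer h2
    have e3 : ‖(k w).2.2‖ = 0 := norm_coe_zero'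
    rw [Sh_eq, mem_inter_iff, mem_Vh, mem_Wh, e1, e2, e3]
    clear e1 e2 e3 hkE
    rcases h3 with h3 | h3
    · exact ⟨Or.inr (Or.inl ⟨by linarith, by linarith⟩), Or.inr (Or.inr ⟨by linarith, by linarith⟩)⟩
    · exact ⟨Or.inl ⟨by linarith, by linarith⟩,
        Or.inr (Or.inr ⟨by linarith, by linarith⟩)⟩
  have hS : ∀ w, (F 1).symm (k w) ∈ Sh := fun w => by
    have h1 : k w ∈ F 1 '' Sh := (hFS 1).symm ▸ hkS w
    obtain ⟨q, hq, hqk⟩ := h1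
    rw [← hqk]
    simpa using hq
  refine no_pull_off Vh prX prY 1 (3 / 4) (1 / 2) (by norm_num) (by norm_num) Vh_avoid_xy k
    (fun _ => rfl) (fun _ => rfl) F hF hF0 (fun t w => Sh_subset_Vh ?_) ?_ ?_
  · rw [← hFS t]
    exact mem_image_of_mem _ (hS w)
  · intro w hw
    change ((F 1).symm (k w)).1 = _ at hw
    have hV := Sh_subset_Vh (hS w)
    have hD : (F 1).symm (k w) ∈ Dd' ∩ Sh := by
      refine ⟨(mem_Dd' _).2 ⟨hw, ?_⟩, hS w⟩
      rw [mem_Vh, hw, norm_coe_half] at hV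
      norm_num at hV ⊢
      exact hV
    have h1 : k w ∈ γ' := by
      rw [← hF1]
      exact ⟨_, hD, by simp⟩
    rw [← hΔ] at h1
    exact disjoint_left.1 hdisj h1.1 (hkE w)
  · intro w hw x hx1 hx2 hx
    change ((F 1).symm (k w)).2.1 = _ at hw
    change ((F 1).symm (k w)).1 = _ at hx
    have hV := Sh_subset_Vh (hS w)
    rw [mem_Vh, hw, hx, norm_coe_one',
      norm_coe_of_abs_le (abs_le.2 ⟨by linarith, hx2⟩), abs_of_pos (by linarith)] at hV
    rcases hV with h | h | h <;> linarith [h.1]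

/-- `∂E'` cannot be isotoped off `∂D`: otherwise `∂D` could be isotoped on `S ⊆ W` off the fibre
`x = 0`, which meets `S` exactly in `∂E'`. -/
lemma Ee'_not_off_Dd (γ' Δ : Set T3) (h : AmbIsotopicIn (Ee' ∩ Sh) γ' Sh) (hΔ : Δ ∩ Sh = γ')
    (hdisj : Disjoint Δ Dd) : False := by
  obtain ⟨F, hF, hF0, hFS, hF1⟩ := h
  let k : C(Circle, T3) := ⟨fun w => (((0 + 1 / 4 * sqX w : ℝ) : AddCircle (2 : ℝ)),
      ((0 + 1 / 4 * sqY w : ℝ) : AddCircle (2 : ℝ)), ((1 / 2 : ℝ) : AddCircle (2 : ℝ))),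
    ((AddCircle.continuous_mk' 2).comp
      (by fun_prop : Continuous fun w => 0 + 1 / 4 * sqX w)).prodMk
      (((AddCircle.continuous_mk' 2).comp
        (by fun_prop : Continuous fun w => 0 + 1 / 4 * sqY w)).prodMk continuous_const)⟩
  have hkD : ∀ w, k w ∈ Dd := fun w => by
    obtain ⟨h1, h2, -⟩ := sq_bounds w
    have e1 : ‖(k w).1‖ = |sqX w| / 4 := norm_inner h1
    have e2 : ‖(k w).2.1‖ = |sqY w| / 4 := norm_inner h2
    rw [mem_Dd, e1, e2]
    exact ⟨rfl, by linarith, by linarith⟩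
  have hkS : ∀ w, k w ∈ Sh := fun w => by
    obtain ⟨h1, h2, h3⟩ := sq_bounds w
    have e1 : ‖(k w).1‖ = |sqX w| / 4 := norm_inner h1
    have e2 : ‖(k w).2.1‖ = |sqY w| / 4 := norm_inner h2
    have e3 : ‖(k w).2.2‖ = 1 / 2 := norm_coe_half
    rw [Sh_eq, mem_inter_iff, mem_Vh, mem_Wh, e1, e2, e3]
    clear e1 e2 e3 hkD
    rcases h3 with h3 | h3
    · exact ⟨Or.inr (Or.inr ⟨by linarith, by linarith⟩), Or.inr (Or.inl ⟨by linarith, by linarith⟩)⟩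
    · exact ⟨Or.inr (Or.inr ⟨by linarith, by linarith⟩),
        Or.inl ⟨by linarith, by linarith⟩⟩
  have hS : ∀ w, (F 1).symm (k w) ∈ Sh := fun w => by
    have h1 : k w ∈ F 1 '' Sh := (hFS 1).symm ▸ hkS w
    obtain ⟨q, hq, hqk⟩ := h1
    rw [← hqk]
    simpa using hq
  have hoff : ∀ w, prX ((F 1).symm (k w)) ≠ ((0 : ℝ) : AddCircle (2 : ℝ)) := by
    intro w hw
    change ((F 1).symm (k w)).1 = _ at hw
    have hW := Sh_subset_Wh (hS w)
    have hE : (F 1).symm (k w) ∈ Ee' ∩ Sh := by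
      refine ⟨(mem_Ee' _).2 ⟨hw, ?_⟩, hS w⟩
      rw [mem_Wh, hw, norm_coe_zero'] at hW
      norm_num at hW ⊢
      exact hW
    have h1 : k w ∈ γ' := by
      rw [← hF1]
      exact ⟨_, hE, by simp⟩
    rw [← hΔ] at h1
    exact disjoint_left.1 hdisj h1.1 (hkD w)
  refine no_pull_off Wh prX prY 0 (1 / 4) 0 (by norm_num) le_rfl Wh_avoid_xy k
    (fun _ => rfl) (fun _ => rfl) F hF hF0 (fun t w => Sh_subset_Wh ?_) hoff ?_
  · rw [← hFS t]
    exact mem_image_of_mem _ (hS w)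
  · intro w _ x hx1 hx2
    rw [le_antisymm hx2 hx1]
    exact hoff w

/-- For the partition `C₀ ⊔ C₁` of the vertices of the disk complex,
`D ∈ D_V(S) ∩ C₀` and `E ∈ D_W(S) ∩ C₀` with `D ∩ E = ∅`, and `D' ∈ D_V(S) ∩ C₁` and
`E' ∈ D_W(S) ∩ C₁` with `D' ∩ E' = ∅`. -/
theorem partition_satisfies_first_condition :
    (Dd ∩ Sh) ∈ DVC0 ∧ (Ee ∩ Sh) ∈ DWC0 ∧ Dd ∩ Ee = ∅ ∧
    (Dd' ∩ Sh) ∈ DVC1 ∧ (Ee' ∩ Sh) ∈ DWC1 ∧ Dd' ∩ Ee' = ∅ := by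
  obtain ⟨hD, hDc, -⟩ := Dd_square
  obtain ⟨hE, hEc, -⟩ := Ee_square
  obtain ⟨hD', hDc', hDW'⟩ := Dd'_square
  obtain ⟨hE', hEc', hEV'⟩ := Ee'_square
  have hDE : Dd ∩ Ee = ∅ := by
    rw [eq_empty_iff_forall_notMem]
    rintro p ⟨h1, h2⟩
    exact coe_zero_ne_half (((mem_Ee p).1 h2).1.symm.trans ((mem_Dd p).1 h1).1)
  have hDE' : Dd' ∩ Ee' = ∅ := by
    rw [eq_empty_iff_forall_notMem]
    rintro p ⟨h1, h2⟩
    exact coe_zero_ne_half (((mem_Ee' p).1 h2).1.symm.trans ((mem_Dd' p).1 h1).1)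
  have iD : InDiskSet (Dd ∩ Sh) Vh Sh := ⟨_, Dd, ambIsotopicIn_refl _ _, hD, rfl⟩
  have iE : InDiskSet (Ee ∩ Sh) Wh Sh := ⟨_, Ee, ambIsotopicIn_refl _ _, hE, rfl⟩
  have iD' : InDiskSet (Dd' ∩ Sh) Vh Sh := ⟨_, Dd', ambIsotopicIn_refl _ _, hD', rfl⟩
  have iE' : InDiskSet (Ee' ∩ Sh) Wh Sh := ⟨_, Ee', ambIsotopicIn_refl _ _, hE', rfl⟩
  have hdisj := disjoint_iff_inter_eq_empty.2 hDE
  refine ⟨⟨⟨⟨hDc, inter_subset_right, hD.2, Or.inl iD⟩,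
      Or.inl ⟨_, Dd, ambIsotopicIn_refl _ _, hD, rfl, hdisj⟩⟩, iD⟩,
    ⟨⟨⟨hEc, inter_subset_right, hE.2, Or.inr iE⟩,
      Or.inr ⟨_, Ee, ambIsotopicIn_refl _ _, hE, rfl, hdisj.symm⟩⟩, iE⟩, hDE,
    ⟨⟨⟨hDc', inter_subset_right, hD'.2, Or.inl iD'⟩, ?_⟩, iD'⟩,
    ⟨⟨⟨hEc', inter_subset_right, hE'.2, Or.inr iE'⟩, ?_⟩, iE'⟩, hDE'⟩
  · rintro (⟨γ', Δ, hiso, -, hγ', hoff⟩ | ⟨γ', Δ, hiso, hΔ, hγ', -⟩)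
    · exact Dd'_not_off_Ee γ' Δ hiso hγ' hoff
    · exact hDW' γ' Δ hiso hΔ.1 hγ'
  · rintro (⟨γ', Δ, hiso, hΔ, hγ', -⟩ | ⟨γ', Δ, hiso, -, hγ', hoff⟩)
    · exact hEV' γ' Δ hiso hΔ.1 hγ'
    · exact Ee'_not_off_Dd γ' Δ hiso hγ' hoff

end
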